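/- Suppose the nonuniform time mesh satisfies ρ_k ≥ η for all k ≥ 2, where η ≈ 0.475329 is the unique positive root of 1 − 3ρ²(1+ρ) = 0. Then for every j ≥ 2 the diagonal and first-column entries of the L2-1_σ matrix satisfy [M]_{j,j} ≤ 1/(η(1+η)(στ_j)^α) + σ^{1−α}/((1−α)τ_j^α) and [M]_{j,1} ≥ η/((1+η)(t_j^*)^α). -/

import Mathlib

open MeasureTheory Real Finset

noncomputable section

/-- Time step `τ_j = t_j - t_{j-1}`. -/
def tau (t : ℕ → ℝ) (j : ℕ) : ℝ := t j - t (j - 1)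

/-- Step ratio `ρ_j = τ_j / τ_{j-1}`. -/
def rho (t : ℕ → ℝ) (j : ℕ) : ℝ := tau t j / tau t (j - 1)

/-- Offset node `t_k^* = t_{k-1} + σ τ_k` with `σ = 1 - α/2`. -/
def tstar (α : ℝ) (t : ℕ → ℝ) (k : ℕ) : ℝ := t (k - 1) + (1 - α / 2) * tau t k

/-- L2-1_σ coefficient `a_j^k`. -/
def acoef (α : ℝ) (t : ℕ → ℝ) (j k : ℕ) : ℝ :=
  ∫ θ in (0:ℝ)..1,
    (-2 * tau t j * (1 - θ) - tau t (j + 1)) /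
      ((tau t j + tau t (j + 1)) * (tstar α t k - (t (j - 1) + θ * tau t j)) ^ α)

/-- L2-1_σ coefficient `c_j^k`. -/
def ccoef (α : ℝ) (t : ℕ → ℝ) (j k : ℕ) : ℝ :=
  ∫ θ in (0:ℝ)..1,
    (tau t j ^ 2 * (2 * θ - 1)) /
      (tau t (j + 1) * (tau t j + tau t (j + 1)) *
        (tstar α t k - (t (j - 1) + θ * tau t j)) ^ α)

/-- `d_j^k = c_{j-1}^k - a_j^k`. -/
def dcoef (α : ℝ) (t : ℕ → ℝ) (j k : ℕ) : ℝ := ccoef α t (j - 1) k - acoef α t j k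

/-- The lower-triangular L2-1_σ matrix `M` (entries vanish above the diagonal and
for column index `0`). -/
def Mentry (α : ℝ) (t : ℕ → ℝ) (k j : ℕ) : ℝ :=
  if j = 0 ∨ k < j then 0
  else if j = k then ccoef α t (k - 1) k + (1 - α / 2) ^ (1 - α) / ((1 - α) * tau t k ^ α)
  else if j = 1 then -acoef α t 1 k
  else dcoef α t j k

end

/-!
On `[t_{j-1}, t_j]` the kernel `(t_k^* - s)^{-α}` lies between its two endpoint values, so only the
polynomial weights of the coefficients matter. In `c_j^k` the weight `2θ - 1` is at most `1` in
absolute value and its prefactor is `1 / (ρ_{j+1} (1 + ρ_{j+1}))`, which decreases in the ratio. In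
`-a_j^k` the weight is positive with integral `1`, so `-a_j^k ≥ (t_k^* - t_{j-1})^{-α}` whatever the
ratios are, and `η / (1 + η) ≤ 1`.
-/

section L21Sigma

variable {α : ℝ} {t : ℕ → ℝ} {j k : ℕ}

theorem add_mul_tau_mem_Icc {θ : ℝ} (hτ : 0 ≤ tau t j) (hθ : θ ∈ Set.Icc (0 : ℝ) 1) :
    t (j - 1) + θ * tau t j ∈ Set.Icc (t (j - 1)) (t j) := by
  have hstep : t j = t (j - 1) + tau t j := by rw [tau]; ring
  rw [hstep]
  exact ⟨le_add_of_nonneg_right (mul_nonneg hθ.1 hτ),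
    (add_le_add_iff_left _).2 (mul_le_of_le_one_left hτ hθ.2)⟩

theorem tau_pos (hmono : StrictMono t) (hj : 1 ≤ j) : 0 < tau t j :=
  sub_pos.2 (hmono (by omega))

theorem tstar_sub (α : ℝ) (t : ℕ → ℝ) (k : ℕ) :
    tstar α t k - t (k - 1) = (1 - α / 2) * tau t k := by
  rw [tstar, add_sub_cancel_left]

theorem lt_tstar (hα : α < 2) (hmono : StrictMono t) (hjk : j < k) : t j < tstar α t k := by
  have hσ : 0 < 1 - α / 2 := by linarith
  have hgap : 0 < tstar α t k - t (k - 1) :=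
    (mul_pos hσ (tau_pos hmono (by omega))).trans_eq (tstar_sub α t k).symm
  exact (hmono.monotone (by omega)).trans_lt (sub_pos.1 hgap)

theorem ccoef_eq_integral_div_rho (hτ : tau t j ≠ 0) :
    ccoef α t j k =
      (∫ θ in (0 : ℝ)..1, (2 * θ - 1) / (tstar α t k - (t (j - 1) + θ * tau t j)) ^ α) /
        (rho t (j + 1) * (1 + rho t (j + 1))) := by
  rw [ccoef, ← intervalIntegral.integral_div]
  congr 1 with θ
  simp only [rho, Nat.add_sub_cancel]
  field_simp

theorem abs_ccoef_le (hα : 0 ≤ α) (hτ : 0 < tau t j) (hτ' : 0 < tau t (j + 1))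
    (hjk : t j < tstar α t k) :
    |ccoef α t j k| ≤
      1 / (rho t (j + 1) * (1 + rho t (j + 1)) * (tstar α t k - t j) ^ α) := by
  have hρ : 0 < rho t (j + 1) := div_pos hτ' hτ
  have hprefactor : 0 < rho t (j + 1) * (1 + rho t (j + 1)) := by positivity
  have hbound : ∀ θ ∈ Set.uIoc (0 : ℝ) 1,
      ‖(2 * θ - 1) / (tstar α t k - (t (j - 1) + θ * tau t j)) ^ α‖ ≤
        1 / (tstar α t k - t j) ^ α := by
    intro θ hθ
    rw [Set.uIoc_of_le zero_le_one] at hθ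
    have hnode := (add_mul_tau_mem_Icc hτ.le (Set.Ioc_subset_Icc_self hθ)).2
    have hweight : |2 * θ - 1| ≤ 1 := abs_le.2 ⟨by linarith [hθ.1], by linarith [hθ.2]⟩
    rw [norm_div, Real.norm_eq_abs, Real.norm_of_nonneg (rpow_nonneg (by linarith) α)]
    gcongr
  have hint := intervalIntegral.norm_integral_le_of_norm_le_const hbound
  rw [sub_zero, abs_one, mul_one, Real.norm_eq_abs] at hint
  rw [ccoef_eq_integral_div_rho hτ.ne', abs_div, abs_of_pos hprefactor]
  exact (div_le_div_of_nonneg_right hint hprefactor.le).trans_eq (by rw [div_div, mul_comm])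

theorem integral_acoef_weight {p q : ℝ} (hpq : p + q ≠ 0) :
    ∫ θ in (0 : ℝ)..1, (2 * p * (1 - θ) + q) / (p + q) = 1 := by
  have hlin : ∫ θ in (0 : ℝ)..1, (2 * p * (1 - θ) + q) = p + q := by
    rw [intervalIntegral.integral_add (Continuous.intervalIntegrable (by fun_prop) 0 1)
        intervalIntegrable_const, intervalIntegral.integral_const_mul,
      intervalIntegral.integral_sub intervalIntegrable_const
        intervalIntegral.intervalIntegrable_id]
    simp only [intervalIntegral.integral_const, integral_id, smul_eq_mul]
    ring
  rw [intervalIntegral.integral_div, hlin, div_self hpq]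

theorem neg_acoef_eq_integral (α : ℝ) (t : ℕ → ℝ) (j k : ℕ) :
    -acoef α t j k =
      ∫ θ in (0 : ℝ)..1, (2 * tau t j * (1 - θ) + tau t (j + 1)) / (tau t j + tau t (j + 1)) /
        (tstar α t k - (t (j - 1) + θ * tau t j)) ^ α := by
  rw [acoef, ← intervalIntegral.integral_neg]
  congr 1 with θ
  rw [← neg_div, div_div]
  ring

theorem one_div_rpow_le_neg_acoef (hα : 0 ≤ α) (hτ : 0 < tau t j) (hτ' : 0 ≤ tau t (j + 1))
    (hjk : t j < tstar α t k) :
    1 / (tstar α t k - t (j - 1)) ^ α ≤ -acoef α t j k := by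
  have hgap : ∀ θ ∈ Set.Icc (0 : ℝ) 1, 0 < tstar α t k - (t (j - 1) + θ * tau t j) :=
    fun θ hθ => sub_pos.2 ((add_mul_tau_mem_Icc hτ.le hθ).2.trans_lt hjk)
  have hmean : 1 / (tstar α t k - t (j - 1)) ^ α =
      ∫ θ in (0 : ℝ)..1, (2 * tau t j * (1 - θ) + tau t (j + 1)) / (tau t j + tau t (j + 1)) /
        (tstar α t k - t (j - 1)) ^ α := by
    rw [intervalIntegral.integral_div, integral_acoef_weight (by positivity)]
  rw [hmean, neg_acoef_eq_integral]
  refine intervalIntegral.integral_mono_on zero_le_one ?_ ?_ fun θ hθ => ?_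
  · exact Continuous.intervalIntegrable (by fun_prop) 0 1
  · refine ContinuousOn.intervalIntegrable_of_Icc zero_le_one
      (ContinuousOn.div (by fun_prop) (ContinuousOn.rpow_const (by fun_prop) ?_) ?_)
    · exact fun θ hθ => Or.inl (hgap θ hθ).ne'
    · exact fun θ hθ => (rpow_pos_of_pos (hgap θ hθ) α).ne'
  · have hpos := hgap θ hθ
    have hnode := (add_mul_tau_mem_Icc hτ.le hθ).1
    have hθ' : 0 ≤ 1 - θ := sub_nonneg.2 hθ.2
    gcongr

theorem Mentry_self (hk : k ≠ 0) :
    Mentry α t k k =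
      ccoef α t (k - 1) k + (1 - α / 2) ^ (1 - α) / ((1 - α) * tau t k ^ α) := by
  rw [Mentry, if_neg (by omega), if_pos rfl]

theorem Mentry_one (hk : 2 ≤ k) : Mentry α t k 1 = -acoef α t 1 k := by
  rw [Mentry, if_neg (by omega), if_neg (by omega), if_pos rfl]

theorem Mentry_self_le {η : ℝ} (hα : α ∈ Set.Ico (0 : ℝ) 2) (hmono : StrictMono t)
    (hη : 0 < η) (hk : 2 ≤ k) (hρ : η ≤ rho t k) :
    Mentry α t k k ≤
      1 / (η * (1 + η) * ((1 - α / 2) * tau t k) ^ α) +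
        (1 - α / 2) ^ (1 - α) / ((1 - α) * tau t k ^ α) := by
  obtain ⟨j, rfl⟩ : ∃ j, k = j + 1 := ⟨k - 1, by omega⟩
  have hjk : t j < tstar α t (j + 1) := lt_tstar hα.2 hmono j.lt_succ_self
  have hρ_pos : 0 < rho t (j + 1) := hη.trans_le hρ
  have hc := (le_abs_self _).trans
    (abs_ccoef_le hα.1 (tau_pos hmono (by omega)) (tau_pos hmono (by omega)) hjk)
  rw [Mentry_self (by omega), ← tstar_sub, Nat.add_sub_cancel]
  gcongr
  exact hc.trans (by gcongr)

theorem one_div_rpow_le_Mentry_one (hα : α ∈ Set.Ico (0 : ℝ) 2) (hmono : StrictMono t)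
    (hk : 2 ≤ k) : 1 / (tstar α t k - t 0) ^ α ≤ Mentry α t k 1 := by
  rw [Mentry_one hk]
  exact one_div_rpow_le_neg_acoef hα.1 (tau_pos hmono le_rfl) (tau_pos hmono (by omega)).le
    (lt_tstar hα.2 hmono hk)

end L21Sigma

theorem div_one_add_mul_le_one_div {a b : ℝ} (ha : 0 ≤ a) (hb : 0 ≤ b) :
    a / ((1 + a) * b) ≤ 1 / b := by
  rw [← div_div]
  gcongr
  exact div_le_one_of_le₀ (by linarith) (by linarith)

-- At `α = 1` the definition of the diagonal entry divides by zero.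
theorem Mentry_diag_col1_bounds_general (α : ℝ) (hα : α ∈ Set.Ico (0 : ℝ) 2 \ {1})
    (t : ℕ → ℝ) (hmono : StrictMono t) (η : ℝ) (hη : 0 < η)
    (j : ℕ) (hj : 2 ≤ j) (hρ : η ≤ rho t j) :
    Mentry α t j j
        ≤ 1 / (η * (1 + η) * ((1 - α / 2) * tau t j) ^ α)
          + (1 - α / 2) ^ (1 - α) / ((1 - α) * tau t j ^ α) ∧
    Mentry α t j 1 ≥ 1 / (tstar α t j - t 0) ^ α :=
  ⟨Mentry_self_le hα.1 hmono hη hj hρ, one_div_rpow_le_Mentry_one hα.1 hmono hj⟩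

/-- Bounds on the diagonal and first-column entries of the L2-1_σ matrix when
`ρ_k ≥ η` for all `k ≥ 2`. -/
theorem Mentry_diag_col1_bounds (α : ℝ) (hα : α ∈ Set.Ioo (0:ℝ) 1)
    (t : ℕ → ℝ) (ht0 : t 0 = 0) (hmono : StrictMono t)
    (η : ℝ) (hηpos : 0 < η) (hηroot : 1 - 3 * η ^ 2 * (1 + η) = 0)
    (hmesh : ∀ k : ℕ, 2 ≤ k → η ≤ rho t k)
    (j : ℕ) (hj : 2 ≤ j) :
    Mentry α t j j
        ≤ 1 / (η * (1 + η) * ((1 - α / 2) * tau t j) ^ α)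
          + (1 - α / 2) ^ (1 - α) / ((1 - α) * tau t j ^ α) ∧
    Mentry α t j 1 ≥ η / ((1 + η) * tstar α t j ^ α) := by
  have htstar : 0 ≤ tstar α t j :=
    ht0.symm.trans_le (lt_tstar (by linarith [hα.2]) hmono (by omega)).le
  obtain ⟨hdiag, hcol⟩ := Mentry_diag_col1_bounds_general α
    ⟨⟨hα.1.le, by linarith [hα.2]⟩, hα.2.ne⟩ t hmono η hηpos j hj (hmesh j hj)
  rw [ht0, sub_zero] at hcol
  exact ⟨hdiag, (div_one_add_mul_le_one_div hηpos.le (rpow_nonneg htstar α)).trans hcol⟩
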